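/- T*_ord, the theory of dense linear orders without endpoints, is ⊲*_λ-maximal for every cardinal λ > ℵ₀. -/

import Mathlib

open FirstOrder FirstOrder.Language Cardinal

namespace SopPaper

/-- A first-order formula with parameters from `M`, in free variables indexed by `Fin m`. -/
structure ParamFormula (L : FirstOrder.Language.{0, 0}) (M : Type*) [L.Structure M] (m : ℕ) where
  k : ℕ
  toFormula : L.Formula (Fin m ⊕ Fin k)
  par : Fin k → M

/-- Realization of a formula with parameters at a tuple `e`. -/
def ParamFormula.Realize {L : FirstOrder.Language.{0, 0}} {M : Type*} [L.Structure M] {m : ℕ}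
    (ψ : ParamFormula L M m) (e : Fin m → M) : Prop :=
  ψ.toFormula.Realize (Sum.elim e ψ.par)

/-- `N` is a `lam`-saturated `L`-structure: every 1-type over a parameter set of
cardinality `< lam` which is finitely satisfiable in `N` is realized in `N`. -/
def IsSaturatedAt (L : FirstOrder.Language.{0, 0}) (N : Type) (S : L.Structure N)
    (lam : Cardinal.{0}) : Prop :=
  ∀ A : Set N, #A < lam →
    ∀ p : Set (@ParamFormula L N S 1),
      (∀ ψ ∈ p, ∀ j, ψ.par j ∈ A) →
      (∀ s : Finset (@ParamFormula L N S 1), ↑s ⊆ p →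
        ∃ e : Fin 1 → N, ∀ ψ ∈ s, ψ.Realize e) →
      ∃ e : Fin 1 → N, ∀ ψ ∈ p, ψ.Realize e

/-- An interpretation (syntactic data) of the language `L₁` in the language `L₀`:
a dimension, a domain formula, an equality formula, and formulas interpreting each
relation symbol and (the graph of) each function symbol. -/
structure Interpretation (L₀ L₁ : FirstOrder.Language.{0, 0}) where
  d : ℕ
  dom : L₀.Formula (Fin d)
  eqf : L₀.Formula (Fin d ⊕ Fin d)
  rel : ∀ n, L₁.Relations n → L₀.Formula (Fin n × Fin d)
  func : ∀ n, L₁.Functions n → L₀.Formula ((Fin n × Fin d) ⊕ Fin d)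

variable {L₀ L₁ L₂ : FirstOrder.Language.{0, 0}}

/-- The domain of the interpretation `I` in an `L₀`-structure `M`. -/
def Interpretation.Dom (I : Interpretation L₀ L₁) (M : Type) [L₀.Structure M] : Type :=
  {a : Fin I.d → M // I.dom.Realize a}

/-- The `L₁`-structure `N` is (isomorphic to) the model `M^[I]` interpreted by `I` inside the
`L₀`-structure `M`, as witnessed by the projection `g` from the domain of `I` in `M` onto `N`. -/
def Interpretation.Represents (I : Interpretation L₀ L₁) (M : Type) [L₀.Structure M]
    (N : Type) (S : L₁.Structure N) (g : I.Dom M → N) : Prop :=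
  Function.Surjective g ∧
  (∀ a b : I.Dom M, g a = g b ↔ I.eqf.Realize (Sum.elim a.1 b.1)) ∧
  (∀ (n : ℕ) (r : L₁.Relations n) (f : Fin n → I.Dom M),
      S.RelMap r (fun i => g (f i)) ↔ (I.rel n r).Realize fun p => (f p.1).1 p.2) ∧
  (∀ (n : ℕ) (F : L₁.Functions n) (f : Fin n → I.Dom M) (b : I.Dom M),
      S.funMap F (fun i => g (f i)) = g b ↔
        (I.func n F).Realize (Sum.elim (fun p => (f p.1).1 p.2) b.1))

/-- `I` is an interpretation of the theory `T₁` in the theory `T₀`: in every model of `T₀`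
the interpreted structure exists and is a model of `T₁`. -/
def Interpretation.InterpretsIn (I : Interpretation L₀ L₁) (T₀ : L₀.Theory)
    (T₁ : L₁.Theory) : Prop :=
  ∀ M : Theory.ModelType.{0, 0, 0} T₀,
    ∃ (N : Theory.ModelType.{0, 0, 0} T₁) (g : I.Dom M → N),
      I.Represents M N inferInstance g

/-- The cardinality of a theory (together with its language), `|T|`. -/
def theoryCard {L : FirstOrder.Language.{0, 0}} (T : L.Theory) : Cardinal.{0} :=
  L.card + #T + ℵ₀

/-- Any model of `T₁` and any model of `T₂` occur (up to elementary equivalence) jointly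
interpreted in a single model of `T₀`; this is the extra demand made on the witnessing theory
when `T₁`, `T₂` are not necessarily complete. -/
def JointModels (T₀ : L₀.Theory) (T₁ : L₁.Theory) (T₂ : L₂.Theory)
    (I₁ : Interpretation L₀ L₁) (I₂ : Interpretation L₀ L₂) : Prop :=
  ∀ (A₁ : Theory.ModelType.{0, 0, 0} T₁) (A₂ : Theory.ModelType.{0, 0, 0} T₂),
    ∃ (M : Theory.ModelType.{0, 0, 0} T₀) (N₁ : Theory.ModelType.{0, 0, 0} T₁)
      (g₁ : I₁.Dom M → N₁) (N₂ : Theory.ModelType.{0, 0, 0} T₂) (g₂ : I₂.Dom M → N₂),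
      I₁.Represents M N₁ inferInstance g₁ ∧ I₂.Represents M N₂ inferInstance g₂ ∧
      (N₁ ≅[L₁] A₁) ∧ (N₂ ≅[L₂] A₂)

/-- The saturation-transfer property: whenever `M ⊨ T₀` is `kap`-saturated (no demand when
`kap = 0`) and the interpreted model `M^[I₂]` is `lam`-saturated, the interpreted model
`M^[I₁]` is `mu`-saturated. -/
def TransferClause (T₀ : L₀.Theory) (I₁ : Interpretation L₀ L₁) (I₂ : Interpretation L₀ L₂)
    (lam mu kap : Cardinal.{0}) : Prop :=
  ∀ M : Theory.ModelType.{0, 0, 0} T₀,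
    (kap = 0 ∨ IsSaturatedAt L₀ M inferInstance kap) →
    ∀ (N₁ : Type) (S₁ : L₁.Structure N₁) (g₁ : I₁.Dom M → N₁)
      (N₂ : Type) (S₂ : L₂.Structure N₂) (g₂ : I₂.Dom M → N₂),
      I₁.Represents M N₁ S₁ g₁ → I₂.Represents M N₂ S₂ g₂ →
      IsSaturatedAt L₂ N₂ S₂ lam → IsSaturatedAt L₁ N₁ S₁ mu

/-- `T₁ ⊲*_{λ,μ,κ} T₂`. -/
def TriangleStar (T₁ : L₁.Theory) (T₂ : L₂.Theory) (lam mu kap : Cardinal.{0}) : Prop :=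
  ∃ (L₀ : FirstOrder.Language.{0, 0}) (T₀ : L₀.Theory)
    (I₁ : Interpretation L₀ L₁) (I₂ : Interpretation L₀ L₂),
    theoryCard T₀ ≤ theoryCard T₁ + theoryCard T₂ ∧
    I₁.InterpretsIn T₀ T₁ ∧ I₂.InterpretsIn T₀ T₂ ∧
    JointModels T₀ T₁ T₂ I₁ I₂ ∧
    TransferClause T₀ I₁ I₂ lam mu kap

/-- `T` is `⊲*_λ`-maximal: `T' ⊲*_λ T` for every theory `T'` with `|T'| < λ`. -/
def TriangleStarMaximal {L : FirstOrder.Language.{0, 0}} (T : L.Theory)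
    (lam : Cardinal.{0}) : Prop :=
  ∀ (L' : FirstOrder.Language.{0, 0}) (T' : L'.Theory), theoryCard T' < lam →
    TriangleStar T' T lam lam 0

/-- The language of trees: a single binary relation `<`. -/
inductive TreeRel : ℕ → Type
  | lt : TreeRel 2

/-- The language of trees. -/
def Ltr : FirstOrder.Language.{0, 0} := ⟨fun _ => Empty, TreeRel⟩

/-- The tree order of an `Ltr`-structure. -/
def treeLt {M : Type*} [Ltr.Structure M] (x y : M) : Prop :=
  Structure.RelMap (L := Ltr) (TreeRel.lt : Ltr.Relations 2) ![x, y]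

/-- `M` is a tree: `<` is a (strict) partial order in which the predecessors of any element
are linearly ordered. -/
def IsTreeStructure (M : Type*) [Ltr.Structure M] : Prop :=
  (∀ x : M, ¬ treeLt x x) ∧
  (∀ x y z : M, treeLt x y → treeLt y z → treeLt x z) ∧
  (∀ x y z : M, treeLt y x → treeLt z x → treeLt y z ∨ treeLt z y ∨ y = z)

/-- The theory of trees: all sentences true in every tree. -/
def Ttr : Ltr.Theory :=
  {σ | ∀ (M : Type) (S : Ltr.Structure M), Nonempty M → @IsTreeStructure M S →
    @Sentence.Realize Ltr M S σ}

/-- `T'` is the model completion of `T`. -/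
def IsModelCompletion {L : FirstOrder.Language.{0, 0}} (T T' : L.Theory) : Prop :=
  (∀ N : Theory.ModelType.{0, 0, 0} T', (N : Type) ⊨ T) ∧
  (∀ M : Theory.ModelType.{0, 0, 0} T, ∃ N : Theory.ModelType.{0, 0, 0} T',
      Nonempty ((M : Type) ↪[L] (N : Type))) ∧
  (∀ (M N : Theory.ModelType.{0, 0, 0} T') (f : (M : Type) ↪[L] (N : Type)) (k : ℕ)
      (ψ : L.Formula (Fin k)) (v : Fin k → M),
      ψ.Realize (f ∘ v) ↔ ψ.Realize v) ∧
  (∀ (A : Theory.ModelType.{0, 0, 0} T) (N₁ N₂ : Theory.ModelType.{0, 0, 0} T')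
      (f₁ : (A : Type) ↪[L] (N₁ : Type)) (f₂ : (A : Type) ↪[L] (N₂ : Type)) (k : ℕ)
      (ψ : L.Formula (Fin k)) (v : Fin k → A),
      ψ.Realize (f₁ ∘ v) ↔ ψ.Realize (f₂ ∘ v))


/-- The language of linear orders: a single binary relation `<`. -/
inductive OrdRel : ℕ → Type
  | lt : OrdRel 2

/-- The language of linear orders. -/
def Lord : FirstOrder.Language.{0, 0} := ⟨fun _ => Empty, OrdRel⟩

/-- The order of an `Lord`-structure. -/
def ordLt {M : Type*} [Lord.Structure M] (x y : M) : Prop :=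
  Structure.RelMap (L := Lord) (OrdRel.lt : Lord.Relations 2) ![x, y]

/-- `M` is a dense linear order without endpoints. -/
def IsDLOStructure (M : Type*) [Lord.Structure M] : Prop :=
  (∀ x : M, ¬ ordLt x x) ∧
  (∀ x y z : M, ordLt x y → ordLt y z → ordLt x z) ∧
  (∀ x y : M, ordLt x y ∨ ordLt y x ∨ x = y) ∧
  (∀ x y : M, ordLt x y → ∃ z : M, ordLt x z ∧ ordLt z y) ∧
  (∀ x : M, ∃ y : M, ordLt x y) ∧
  (∀ x : M, ∃ y : M, ordLt y x)

/-- `T*_ord`, the theory of dense linear orders without endpoints (the model completion of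
the theory of linear orders): all sentences true in every dense linear order without
endpoints. -/
def Tdlo : Lord.Theory :=
  {σ | ∀ (M : Type) (S : Lord.Structure M), Nonempty M → @IsDLOStructure M S →
    @Sentence.Realize Lord M S σ}

/-!
Given `T`, the witnessing theory describes a dense linear order without endpoints carrying three
more binary relations. One of them makes a model `N` of `T` a quotient of the universe. The other
two make the universe a tree of conditions: a node lists finitely many conditions on a point of the
universe, every subset of `N` definable with parameters is a condition, conditions can be appended
at any node, and the cones of the tree are convex for the order.

If the order is `λ`-saturated, then a chain of fewer than `λ` nodes without a last one has an upper
bound: the chain is a decreasing family of intervals, and a point in all of them is a node above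
the chain. This bound may be incompatible with some of the conditions of a given family, but on
the way to it each condition stays compatible up to a last node, and filling a second cut, below
all these obstacles, corrects the bound. By Zorn's lemma some node forces every condition of a
finitely satisfiable family of size less than `λ`, which is to say that the family is realized:
`N` is `λ`-saturated.

Such trees exist over every `N`: take the finitely supported functions from a linear order of
indices of conditions to `ℚ`, ordered lexicographically. The tree order is that of initial segments
of the support.
-/

/-! ### Cardinalities -/

theorem mk_finset_lt {α : Type*} {lam : Cardinal} (hlam : ℵ₀ < lam) (hα : #α < lam) :
    #(Finset α) < lam := by
  cases finite_or_infinite α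
  · exact mk_lt_aleph0.trans hlam
  · rwa [mk_finset_of_infinite]

theorem mk_formula_le (L : FirstOrder.Language.{0, 0}) (α : Type) :
    #(L.Formula α) ≤ max ℵ₀ (#α + L.card) := by
  have : #(L.Formula α) ≤ #(Σ n, L.BoundedFormula α n) :=
    mk_le_of_injective (sigma_mk_injective (i := 0))
  simpa only [lift_id] using this.trans BoundedFormula.card_le

theorem mk_paramFormula_lt {L : FirstOrder.Language.{0, 0}} {N : Type} [L.Structure N]
    {lam : Cardinal.{0}} (hlam : ℵ₀ < lam) (hL : L.card < lam)
    {A : Set N} (hA : #A < lam) : #{ψ : ParamFormula L N 1 | ∀ j, ψ.par j ∈ A} < lam := by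
  let κ := ℵ₀ + L.card + #A
  have hκ : ℵ₀ ≤ κ := (self_le_add_right _ _).trans (self_le_add_right _ _)
  have hLκ : L.card ≤ κ := (self_le_add_left _ _).trans (self_le_add_right _ _)
  have hAκ : #A ≤ κ := self_le_add_left _ _
  have mk_formula (k : ℕ) : #(L.Formula (Fin 1 ⊕ Fin k)) ≤ κ :=
    (mk_formula_le L _).trans <| max_le hκ <| add_le_of_le hκ (mk_le_aleph0.trans hκ) hLκ
  have mk_par (k : ℕ) : #(Fin k → A) ≤ κ := by
    simpa using (power_le_power_right hAκ).trans (power_nat_le hκ)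
  let code (ψ : {ψ : ParamFormula L N 1 | ∀ j, ψ.par j ∈ A}) :
      Σ k, L.Formula (Fin 1 ⊕ Fin k) × (Fin k → A) :=
    ⟨ψ.1.k, ψ.1.toFormula, fun j => ⟨ψ.1.par j, ψ.2 j⟩⟩
  let decode (c : Σ k, L.Formula (Fin 1 ⊕ Fin k) × (Fin k → A)) : ParamFormula L N 1 :=
    ⟨c.1, c.2.1, fun j => c.2.2 j⟩
  have code_injective : code.Injective := fun ψ χ h => Subtype.ext (congrArg decode h)
  calc #{ψ : ParamFormula L N 1 | ∀ j, ψ.par j ∈ A}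
      ≤ #(Σ k, L.Formula (Fin 1 ⊕ Fin k) × (Fin k → A)) := mk_le_of_injective code_injective
    _ = Cardinal.sum fun k => #(L.Formula (Fin 1 ⊕ Fin k)) * #(Fin k → A) := by
      simp only [mk_sigma, mk_prod, lift_id]
    _ ≤ Cardinal.sum fun _ : ℕ => κ :=
      sum_le_sum _ _ fun k => mul_le_of_le hκ (mk_formula k) (mk_par k)
    _ ≤ κ := by
      rw [sum_const, mk_nat, lift_id, lift_id]
      exact mul_le_of_le hκ hκ le_rfl
    _ < lam := add_lt_of_lt hlam.le (add_lt_of_lt hlam.le hlam hL) hA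

/-! ### Condition trees and cut filling -/

section ConditionTree

universe u

variable {M : Type u}

/-- Every pair of sets of size `< lam` lying on the two sides of a cut has an element in between:
the only consequence of `lam`-saturation of a dense linear order that the argument uses. -/
def FillsCuts (M : Type u) [LT M] (lam : Cardinal.{u}) : Prop :=
  ∀ (ι κ : Type u) (a : ι → M) (b : κ → M), #ι < lam → #κ < lam → (∀ i j, a i < b j) →
    ∃ x, (∀ i, a i < x) ∧ ∀ j, x < b j

theorem FillsCuts.of_bijective {N : Type u} [LT M] [LT N] {lam : Cardinal.{u}}
    (hN : FillsCuts N lam) {f : M → N} (hf : f.Bijective) (hlt : ∀ x y, f x < f y ↔ x < y) :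
    FillsCuts M lam := by
  intro ι κ a b hι hκ hab
  obtain ⟨y, hay, hyb⟩ := hN ι κ (f ∘ a) (f ∘ b) hι hκ fun i j => (hlt _ _).2 (hab i j)
  obtain ⟨x, rfl⟩ := hf.surjective y
  exact ⟨x, fun i => (hlt _ _).1 (hay i), fun j => (hlt _ _).1 (hyb j)⟩

/-- A tree of conditions on a linear order. Every element `s` of `M` codes a finite sequence of
conditions: `pre s t` says that `s` is an initial segment of `t`, and `con s y` says that `y`
meets every condition listed in `s`. The cones `{x | pre s x}` are convex, and strictly below `s`
the segments of a given `t` lead into an interval of the cone of `s`. All clauses are first-order,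
so that they survive in an arbitrary model of the theory of a concrete such tree. -/
structure IsConditionTree [LT M] (pre con : M → M → Prop) : Prop where
  refl : ∀ s, pre s s
  trans : ∀ s t u, pre s t → pre t u → pre s u
  total : ∀ s t u, pre s u → pre t u → pre s t ∨ pre t s
  convex : ∀ s a b x, pre s a → pre s b → a < x → x < b → pre s x
  exists_bounds : ∀ s t, pre s t → s ≠ t → ∃ a b, pre s a ∧ pre s b ∧
    ∀ u x, pre s u → s ≠ u → pre u t → pre u x → a < x ∧ x < b
  con_of_pre : ∀ s t y, pre s t → con t y → con s y
  exists_root : ∃ r, ∀ y, con r y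
  exists_append : ∀ s c, ∃ t, pre s t ∧ ∀ y, con t y ↔ con s y ∧ con c y
  exists_last : ∀ v t c, pre v t → (∃ y, con v y ∧ con c y) →
    ∃ u, pre u t ∧ (∃ y, con u y ∧ con c y) ∧
      ∀ w, pre w t → (∃ y, con w y ∧ con c y) → pre w u
  exists_meet : ∀ s t, ∃ u, pre u s ∧ pre u t ∧ ∀ w, pre w s → pre w t → pre w u

/-- The node `s` is compatible with each of the conditions `q i`. -/
def IsConsistent {ι : Type*} (con : M → M → Prop) (q : ι → M) (s : M) : Prop :=
  ∀ i, ∃ y, con s y ∧ con (q i) y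

/-- The conditions among the `q i` that the node `s` forces. -/
def forced {ι : Type*} (con : M → M → Prop) (q : ι → M) (s : M) : Set ι :=
  {i | ∀ y, con s y → con (q i) y}

namespace IsConditionTree

variable {pre con : M → M → Prop} {ι κ : Type u}

theorem forced_mono [LT M] (h : IsConditionTree pre con) (q : ι → M) {s t : M} (hst : pre s t) :
    forced con q s ⊆ forced con q t :=
  fun _ hi y hy => hi y (h.con_of_pre _ _ _ hst hy)

theorem exists_finset_con [LT M] (h : IsConditionTree pre con) (q : ι → M) (F : Finset ι) :
    ∃ s, ∀ y, con s y ↔ ∀ i ∈ F, con (q i) y := by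
  classical
  induction F using Finset.induction_on with
  | empty => simpa using h.exists_root
  | insert i F _ ih =>
    obtain ⟨s, hs⟩ := ih
    obtain ⟨t, -, ht⟩ := h.exists_append s (q i)
    exact ⟨t, fun y => by simp [ht, hs, and_comm]⟩

/-- The barrier `z` separates the segments of `t` that are compatible with `c` from the longer ones,
if there are any. -/
theorem exists_barrier [Preorder M] (h : IsConditionTree pre con) {t v c : M} (hv : pre v t)
    (hvc : ∃ y, con v y ∧ con c y) :
    ∃ z, (∀ s, pre s t → (∃ y, con s y ∧ con c y) → pre s z) ∧
      ∀ x < z, ∀ u, pre u x → pre u t → ∃ y, con u y ∧ con c y := by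
  obtain ⟨w, hwt, ⟨y, hwy, hcy⟩, hlast⟩ := h.exists_last v t c hv hvc
  have compatible_of_pre : ∀ u, pre u w → ∃ y, con u y ∧ con c y :=
    fun u hu => ⟨y, h.con_of_pre _ _ _ hu hwy, hcy⟩
  rcases eq_or_ne w t with rfl | hne
  · exact ⟨w, fun s hs _ => hs, fun _ _ u _ hu => compatible_of_pre u hu⟩
  obtain ⟨z, _, hwz, -, hz⟩ := h.exists_bounds w t hwt hne
  refine ⟨z, fun s hs hsc => h.trans _ _ _ (hlast s hs hsc) hwz, fun x hxz u hux hut => ?_⟩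
  rcases h.total u w t hut hwt with huw | hwu
  · exact compatible_of_pre u huw
  · rcases eq_or_ne w u with rfl | hne
    · exact compatible_of_pre w (h.refl w)
    · exact absurd (hz u x hwu hne hut hux).1 hxz.asymm

/-- One application of cut filling gives a bound `t` of the chain, which need not be consistent.
A second one moves it back below the barriers of all the conditions `q k` along `t`. -/
theorem exists_consistent_upperBound [Preorder M] (h : IsConditionTree pre con)
    {lam : Cardinal.{u}} (hlam : ℵ₀ ≤ lam) (hfill : FillsCuts M lam) (hι : #ι < lam)
    (hκ : #κ < lam) [Nonempty ι] {s : ι → M} {q : κ → M} (hdir : Directed pre s)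
    (hnolast : ∀ i, ∃ j, pre (s i) (s j) ∧ s i ≠ s j) (hs : ∀ i, IsConsistent con q (s i)) :
    ∃ u, IsConsistent con q u ∧ ∀ i, pre (s i) u := by
  choose n hn hne using hnolast
  choose a b ha hb hab using fun i => h.exists_bounds _ _ (hn i) (hne i)
  have mem_interval : ∀ i x, pre (s (n i)) x → a i < x ∧ x < b i :=
    fun i x => hab i (s (n i)) x (hn i) (hne i) (h.refl _)
  have mem_cone : ∀ i x, a i < x → x < b i → pre (s i) x :=
    fun i x => h.convex _ _ _ _ (ha i) (hb i)
  have bounds_lt : ∀ i j, a i < b j := fun i j =>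
    let ⟨k, hik, hjk⟩ := hdir (n i) (n j)
    (mem_interval i _ hik).1.trans (mem_interval j _ hjk).2
  obtain ⟨t, hat, htb⟩ := hfill ι ι a b hι hι bounds_lt
  have hst : ∀ i, pre (s i) t := fun i => mem_cone i t (hat i) (htb i)
  choose z hsz hz using fun k =>
    h.exists_barrier (c := q k) (hst (Classical.arbitrary ι)) (hs _ k)
  have lt_barrier : ∀ i k, a i < z k :=
    fun i k => (mem_interval i _ (hsz k _ (hst _) (hs _ k))).1
  obtain ⟨x, hax, hxb⟩ := hfill ι (ι ⊕ κ) a (Sum.elim b z) hι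
    (by simpa using add_lt_of_lt hlam hι hκ)
    fun i => Sum.rec (bounds_lt i) (lt_barrier i)
  obtain ⟨u, hux, hut, hmeet⟩ := h.exists_meet x t
  exact ⟨u, fun k => hz k x (hxb (Sum.inr k)) u hux hut,
    fun i => hmeet _ (mem_cone i x (hax i) (hxb (Sum.inl i))) (hst i)⟩

/-- The order in which a node forcing all conditions is found as a maximal element: every proper
extension forces a new condition, so that no chain has more members than there are conditions. -/
def Extends (pre con : M → M → Prop) (q : κ → M) (s t : M) : Prop :=
  pre s t ∧ (forced con q s = forced con q t → s = t)

theorem extends_refl [LT M] (h : IsConditionTree pre con) (q : κ → M) (s : M) :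
    Extends pre con q s s :=
  ⟨h.refl s, fun _ => rfl⟩

theorem extends_trans [LT M] (h : IsConditionTree pre con) {q : κ → M} {s t u : M}
    (hst : Extends pre con q s t) (htu : Extends pre con q t u) : Extends pre con q s u := by
  refine ⟨h.trans _ _ _ hst.1 htu.1, fun hsu => ?_⟩
  have forced_eq : forced con q s = forced con q t :=
    (h.forced_mono q hst.1).antisymm (hsu ▸ h.forced_mono q htu.1)
  exact (hst.2 forced_eq).trans (htu.2 (forced_eq ▸ hsu))

theorem exists_mem_forced_notMem_of_extends [LT M] (h : IsConditionTree pre con) {q : κ → M}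
    {s t : M} (hst : Extends pre con q s t) (hne : s ≠ t) :
    ∃ i ∈ forced con q t, i ∉ forced con q s := by
  by_contra! hsub
  exact hne (hst.2 ((h.forced_mono q hst.1).antisymm hsub))

theorem exists_extends_upperBound [Preorder M] (h : IsConditionTree pre con)
    {lam : Cardinal.{u}} (hlam : ℵ₀ ≤ lam) (hfill : FillsCuts M lam) (hκ : #κ < lam) {q : κ → M}
    {C : Set M} (hC : IsChain (Extends pre con q) C) (hne : C.Nonempty)
    (hcons : ∀ s ∈ C, IsConsistent con q s) :
    ∃ u, IsConsistent con q u ∧ ∀ s ∈ C, Extends pre con q s u := by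
  by_cases hlast : ∃ u ∈ C, ∀ s ∈ C, Extends pre con q s u
  · obtain ⟨u, hu, hle⟩ := hlast
    exact ⟨u, hcons u hu, hle⟩
  have : Std.Refl (Extends pre con q) := ⟨h.extends_refl q⟩
  -- A chain without a last node is cofinal with a family indexed by the conditions it forces.
  let I : Set κ := ⋃ s ∈ C, forced con q s
  choose node node_mem forced_node using fun i : I => Set.mem_iUnion₂.1 i.2
  have exists_later : ∀ s ∈ C, ∃ i : I, (i : κ) ∉ forced con q s ∧ pre s (node i) := by
    intro s hs
    push Not at hlast
    obtain ⟨t, ht, hts⟩ := hlast s hs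
    obtain ⟨i, hit, his⟩ := h.exists_mem_forced_notMem_of_extends
      ((hC.total hs ht).resolve_right hts) fun hst => hts (hst ▸ h.extends_refl q s)
    let i' : I := ⟨i, Set.mem_biUnion ht hit⟩
    exact ⟨i', his, ((hC.total hs (node_mem i')).resolve_right fun hle =>
      his (h.forced_mono q hle.1 (forced_node i'))).1⟩
  have : Nonempty I := let ⟨s, hs⟩ := hne; let ⟨i, _⟩ := exists_later s hs; ⟨i⟩
  have node_directed : Directed pre node := fun i j =>
    (hC.total (node_mem i) (node_mem j)).elim (fun hij => ⟨j, hij.1, h.refl _⟩)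
      fun hji => ⟨i, h.refl _, hji.1⟩
  have node_noLast : ∀ i, ∃ j, pre (node i) (node j) ∧ node i ≠ node j := fun i =>
    let ⟨j, hj, hij⟩ := exists_later _ (node_mem i)
    ⟨j, hij, fun heq => hj (heq ▸ forced_node j)⟩
  obtain ⟨u, hu, hnode⟩ := h.exists_consistent_upperBound hlam hfill ((mk_set_le I).trans_lt hκ)
    hκ node_directed node_noLast fun i => hcons _ (node_mem i)
  refine ⟨u, hu, fun s hs => ?_⟩
  obtain ⟨i, his, hsi⟩ := exists_later s hs
  exact ⟨h.trans _ _ _ hsi (hnode i), fun heq =>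
    absurd (heq ▸ h.forced_mono q (hnode i) (forced_node i)) his⟩

theorem exists_isConsistent_forced [LT M] (h : IsConditionTree pre con) {q : κ → M}
    (hq : Directed (fun c d => ∀ y, con d y → con c y) q) {s : M} (hs : IsConsistent con q s)
    (i : κ) : ∃ t, pre s t ∧ IsConsistent con q t ∧ i ∈ forced con q t := by
  obtain ⟨t, hst, ht⟩ := h.exists_append s (q i)
  refine ⟨t, hst, fun j => ?_, fun y hy => ((ht y).1 hy).2⟩
  obtain ⟨k, hik, hjk⟩ := hq i j
  obtain ⟨y, hsy, hky⟩ := hs k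
  exact ⟨y, (ht y).2 ⟨hsy, hik y hky⟩, hjk y hky⟩

theorem exists_forall_con_of_directed [Preorder M] (h : IsConditionTree pre con)
    {lam : Cardinal.{u}} (hlam : ℵ₀ ≤ lam) (hfill : FillsCuts M lam) (hκ : #κ < lam) [Nonempty κ]
    {q : κ → M} (hq : Directed (fun c d => ∀ y, con d y → con c y) q)
    (hcons : ∀ i, ∃ y, con (q i) y) : ∃ y, ∀ i, con (q i) y := by
  obtain ⟨root, hroot⟩ := h.exists_root
  have : Nonempty {s // IsConsistent con q s} :=
    ⟨root, fun i => (hcons i).imp fun y hy => ⟨hroot y, hy⟩⟩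
  let r := fun s t : {s // IsConsistent con q s} => Extends pre con q s t
  have chain_bounded : ∀ C, IsChain r C → C.Nonempty → ∃ u, ∀ s ∈ C, r s u := by
    intro C hC hne
    have chain_image := hC.image_of_map_rel r (Extends pre con q) Subtype.val fun _ _ => id
    obtain ⟨u, hu, hCu⟩ := h.exists_extends_upperBound hlam hfill hκ chain_image (hne.image _)
      (by rintro _ ⟨s, -, rfl⟩; exact s.2)
    exact ⟨⟨u, hu⟩, fun s hs => hCu s ⟨s, hs, rfl⟩⟩
  obtain ⟨m, hmax⟩ := exists_maximal_of_nonempty_chains_bounded chain_bounded h.extends_trans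
  have forced_max : ∀ i, i ∈ forced con q (m : M) := by
    intro i
    obtain ⟨t, hmt, ht, hit⟩ := h.exists_isConsistent_forced hq m.2 i
    by_contra him
    exact him (h.forced_mono q (hmax ⟨t, ht⟩ ⟨hmt, fun heq => absurd (heq ▸ hit) him⟩).1 hit)
  obtain ⟨y, hy, -⟩ := m.2 (Classical.arbitrary κ)
  exact ⟨y, fun i => forced_max i y hy⟩

/-- The tree turns cut filling into compactness for the coded conditions. -/
theorem exists_forall_con [Preorder M] (h : IsConditionTree pre con)
    {lam : Cardinal.{u}} (hlam : ℵ₀ < lam) (hfill : FillsCuts M lam) (hκ : #κ < lam) {q : κ → M}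
    (hfin : ∀ F : Finset κ, ∃ y, ∀ i ∈ F, con (q i) y) : ∃ y, ∀ i, con (q i) y := by
  classical
  choose meet hmeet using h.exists_finset_con q
  have meet_directed : Directed (fun c d => ∀ y, con d y → con c y) meet := fun F G =>
    ⟨F ∪ G, fun y hy => (hmeet F y).2 fun i hi => (hmeet _ y).1 hy i (Finset.mem_union_left G hi),
      fun y hy => (hmeet G y).2 fun i hi => (hmeet _ y).1 hy i (Finset.mem_union_right F hi)⟩
  obtain ⟨y, hy⟩ := h.exists_forall_con_of_directed hlam.le hfill (mk_finset_lt hlam hκ)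
    meet_directed fun F => (hfin F).imp fun y => (hmeet F y).2
  exact ⟨y, fun i => (hmeet {i} y).1 (hy {i}) i (Finset.mem_singleton_self i)⟩

end IsConditionTree

end ConditionTree

/-! ### The tree of finitely supported functions -/

section FinsuppTree

variable {W K A : Type*} [Zero K]

/-- The condition coded by `s`: membership in `cond w` for every `w` in the support of `s`. -/
def condSet (cond : W → Set A) (s : W →₀ K) : Set A :=
  {a | ∀ w, s w ≠ 0 → a ∈ cond w}

theorem condSet_single {cond : W → Set A} {w : W} {k : K} (hk : k ≠ 0) :
    condSet cond (Finsupp.single w k) = cond w := by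
  classical
  ext a
  simp [condSet, Finsupp.single_apply, hk]

variable [LinearOrder W]

/-- Finitely supported functions as finite sequences of nonzero labels: `s` is the restriction of
`t` to an initial segment of the support of `t`. -/
def IsSegment (s t : W →₀ K) : Prop :=
  ∀ w, s w ≠ 0 → ∀ v ≤ w, t v = s v

namespace IsSegment

variable {s t u : W →₀ K}

theorem refl (s : W →₀ K) : IsSegment s s := fun _ _ _ _ => rfl

theorem zero_left (t : W →₀ K) : IsSegment 0 t := fun _ hw => absurd rfl hw

theorem ne_zero (h : IsSegment s t) {w : W} (hw : s w ≠ 0) : t w ≠ 0 :=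
  (h w hw w le_rfl).symm ▸ hw

theorem trans (hst : IsSegment s t) (htu : IsSegment t u) : IsSegment s u :=
  fun w hw v hv => (htu w (hst.ne_zero hw) v hv).trans (hst w hw v hv)

theorem of_ne_zero (hsu : IsSegment s u) (htu : IsSegment t u) (h : ∀ w, s w ≠ 0 → t w ≠ 0) :
    IsSegment s t :=
  fun w hw v hv => (htu w (h w hw) v hv).symm.trans (hsu w hw v hv)

theorem total (hsu : IsSegment s u) (htu : IsSegment t u) : IsSegment s t ∨ IsSegment t s := by
  by_contra! h
  simp only [IsSegment, not_forall] at h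
  obtain ⟨⟨v, hv, v', hv', hne⟩, w, hw, w', hw', hne'⟩ := h
  rcases le_total v w with hvw | hwv
  · exact hne ((htu w hw v' (hv'.trans hvw)).symm.trans (hsu v hv v' hv'))
  · exact hne' ((hsu v hv w' (hw'.trans hwv)).symm.trans (htu w hw w' hw'))

theorem condSet_anti (cond : W → Set A) (h : IsSegment s t) : condSet cond t ⊆ condSet cond s :=
  fun _ ha w hw => ha w (h.ne_zero hw)

theorem update {w : W} (hw : ∀ v, s v ≠ 0 → v < w) (k : K) :
    IsSegment s (s.update w k) :=
  fun v hv v' hv' => by simp [(hv'.trans_lt (hw v hv)).ne]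

theorem exists_last {v : W →₀ K} (P : (W →₀ K) → Prop) (hv : IsSegment v t) (hP : P v) :
    ∃ u, IsSegment u t ∧ P u ∧ ∀ w, IsSegment w t → P w → IsSegment w u := by
  classical
  obtain ⟨u, ⟨hu, hPu⟩, hmin⟩ := exists_minimalFor_of_wellFoundedLT
    (fun u => IsSegment u t ∧ P u) (fun u => t.support \ u.support) ⟨v, hv, hP⟩
  refine ⟨u, hu, hPu, fun w hw hPw => (hw.total hu).elim id fun huw => ?_⟩
  have support_le := hmin ⟨hw, hPw⟩ fun x hx => by
    simp only [Finset.mem_sdiff, Finsupp.mem_support_iff] at hx ⊢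
    exact ⟨hx.1, fun hux => hx.2 (huw.ne_zero hux)⟩
  refine hw.of_ne_zero hu fun x hx hux => ?_
  have := @support_le x
  simp [hx, hux, hw.ne_zero hx] at this

theorem exists_firstNe (hne : s ≠ t) : ∃ w, s w ≠ t w ∧ ∀ v < w, s v = t v := by
  classical
  obtain ⟨w, hw, hmin⟩ := (s.neLocus t).exists_minimal (Finsupp.nonempty_neLocus_iff.2 hne)
  refine ⟨w, Finsupp.mem_neLocus.1 hw, fun v hv => ?_⟩
  by_contra hne
  exact (hmin (Finsupp.mem_neLocus.2 hne) hv.le).not_gt hv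

theorem exists_branch (h : IsSegment s t) (hne : s ≠ t) :
    ∃ w, (∀ v, s v ≠ 0 → v < w) ∧ (∀ v < w, t v = s v) ∧
      ∀ u x, IsSegment s u → s ≠ u → IsSegment u t → IsSegment u x → ∀ v ≤ w, x v = t v := by
  obtain ⟨w, hw, heq⟩ := exists_firstNe hne
  refine ⟨w, fun v hv => lt_of_not_ge fun hwv => hw (h v hv w hwv).symm,
    fun v hv => (heq v hv).symm, fun u x hsu hsu' hut hux v hv => ?_⟩
  obtain ⟨w', hw', -⟩ := exists_firstNe hsu'
  have hsw' : s w' = 0 := by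
    by_contra h0
    exact hw' (hsu w' h0 w' le_rfl).symm
  have huw' : u w' ≠ 0 := hsw' ▸ hw'.symm
  have hww' : w ≤ w' := le_of_not_gt fun hlt => hut.ne_zero huw' (heq w' hlt ▸ hsw')
  exact (hux w' huw' v (hv.trans hww')).trans (hut w' huw' v (hv.trans hww')).symm

theorem convex [LinearOrder K] {a b x : Lex (W →₀ K)} (ha : IsSegment s (ofLex a))
    (hb : IsSegment s (ofLex b)) (hax : a < x) (hxb : x < b) : IsSegment s (ofLex x) := by
  intro w hw v hv
  obtain ⟨i, hai, hi⟩ := Finsupp.Lex.lt_iff.1 hax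
  obtain ⟨j, hbj, hj⟩ := Finsupp.Lex.lt_iff.1 hxb
  by_cases hwi : w < i
  · exact (hai v (hv.trans_lt hwi)).symm.trans (ha w hw v hv)
  by_cases hwj : w < j
  · exact (hbj v (hv.trans_lt hwj)).trans (hb w hw v hv)
  push Not at hwi hwj
  rcases lt_trichotomy i j with hij | rfl | hji
  · exact absurd ((hb w hw i hwi).trans (ha w hw i hwi).symm) (hbj i hij ▸ hi.ne')
  · exact absurd (hi.trans hj) ((ha w hw i hwi).trans (hb w hw i hwi).symm).not_lt
  · exact absurd ((ha w hw j hwj).trans (hb w hw j hwj).symm) (hai j hji ▸ hj.ne)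

end IsSegment

variable [LinearOrder K]

theorem toLex_update_lt {s t : W →₀ K} {w : W} {k : K} (heq : ∀ v < w, t v = s v) (hk : k < t w) :
    toLex (s.update w k) < toLex t :=
  Finsupp.Lex.lt_iff.2 ⟨w, fun v hv => by simp [hv.ne, heq v hv], by simpa using hk⟩

theorem lt_toLex_update {s t : W →₀ K} {w : W} {k : K} (heq : ∀ v < w, t v = s v) (hk : t w < k) :
    toLex t < toLex (s.update w k) :=
  Finsupp.Lex.lt_iff.2 ⟨w, fun v hv => by simp [hv.ne, heq v hv], by simpa using hk⟩

instance [Nonempty W] [NoMaxOrder K] : NoMaxOrder (Lex (W →₀ K)) where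
  exists_gt s :=
    let w := Classical.arbitrary W
    let ⟨_, hk⟩ := exists_gt (ofLex s w)
    ⟨_, lt_toLex_update (fun _ _ => rfl) hk⟩

instance [Nonempty W] [NoMinOrder K] : NoMinOrder (Lex (W →₀ K)) where
  exists_lt s :=
    let w := Classical.arbitrary W
    let ⟨_, hk⟩ := exists_lt (ofLex s w)
    ⟨_, toLex_update_lt (fun _ _ => rfl) hk⟩

instance [DenselyOrdered K] : DenselyOrdered (Lex (W →₀ K)) where
  dense s t hst := by
    obtain ⟨w, heq, hw⟩ := Finsupp.Lex.lt_iff.1 hst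
    obtain ⟨k, hsk, hkt⟩ := exists_between hw
    exact ⟨_, lt_toLex_update (fun _ _ => rfl) hsk,
      toLex_update_lt (fun v hv => (heq v hv).symm) hkt⟩

theorem isConditionTree_finsupp [NoMaxOrder K] [NoMinOrder K] {cond : W → Set A}
    (hcond : ∀ (F : Finset W) (X : Set A), ∃ w, cond w = X ∧ ∀ v ∈ F, v < w)
    (π : Lex (W →₀ K) → A) :
    IsConditionTree (fun s t : Lex (W →₀ K) => IsSegment (ofLex s) (ofLex t))
      fun s y => π y ∈ condSet cond (ofLex s) where
  refl s := .refl _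
  trans s t u := IsSegment.trans
  total s t u := IsSegment.total
  convex s a b x := IsSegment.convex
  exists_bounds s t hst hne := by
    obtain ⟨w, hw, heq, hbranch⟩ := hst.exists_branch hne
    obtain ⟨a, ha⟩ := exists_lt (ofLex t w)
    obtain ⟨b, hb⟩ := exists_gt (ofLex t w)
    refine ⟨_, _, .update hw a, .update hw b, fun u x hsu hsu' hut hux => ?_⟩
    have hxt := hbranch _ _ hsu hsu' hut hux
    have hxs : ∀ v < w, ofLex x v = ofLex s v := fun v hv => (hxt v hv.le).trans (heq v hv)
    exact ⟨toLex_update_lt hxs (hxt w le_rfl ▸ ha), lt_toLex_update hxs (hxt w le_rfl ▸ hb)⟩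
  con_of_pre s t y hst hy := hst.condSet_anti cond hy
  exists_root := ⟨0, fun y w hw => absurd rfl hw⟩
  exists_append s c := by
    obtain ⟨w, hwc, hw⟩ := hcond (ofLex s).support (condSet cond (ofLex c))
    obtain ⟨k, hk⟩ := exists_gt (0 : K)
    replace hw : ∀ v, ofLex s v ≠ 0 → v < w := fun v hv => hw v (Finsupp.mem_support_iff.2 hv)
    refine ⟨toLex ((ofLex s).update w k), .update hw k, fun y => ⟨fun hy => ⟨?_, ?_⟩, ?_⟩⟩
    · exact (IsSegment.update hw k).condSet_anti cond hy
    · exact hwc ▸ hy w (by simpa using hk.ne')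
    · rintro ⟨hys, hyc⟩ v hv
      rcases eq_or_ne v w with rfl | hvw
      · exact hwc ▸ hyc
      · exact hys v (by simpa [hvw] using hv)
  exists_last v t c hvt := IsSegment.exists_last
    (fun u => ∃ y, π y ∈ condSet cond u ∧ π y ∈ condSet cond (ofLex c)) hvt
  exists_meet s t :=
    let ⟨u, hut, hus, hlast⟩ := IsSegment.exists_last (IsSegment · (ofLex s)) (.zero_left (ofLex t))
      (.zero_left _)
    ⟨toLex u, hus, hut, fun w hws hwt => hlast _ hwt hws⟩

/-- The indices of conditions: the `ℕ`-coordinate makes every condition occur cofinally. -/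
abbrev CondIndex (A : Type*) := ℕ ×ₗ LinearExtension (Set A)

theorem exists_conditionTree.{u} (A : Type u) [Nonempty A] :
    ∃ (U : Type u) (_ : LinearOrder U) (_ : DenselyOrdered U) (_ : NoMinOrder U) (_ : NoMaxOrder U)
      (_ : Nonempty U) (pre con : U → U → Prop) (π : U → A),
      IsConditionTree pre con ∧ π.Surjective ∧ ∀ X : Set A, ∃ c, ∀ y, con c y ↔ π y ∈ X := by
  let cond : CondIndex A → Set A := fun w => (ofLex w).2
  have hcond : ∀ (F : Finset (CondIndex A)) (X : Set A), ∃ w, cond w = X ∧ ∀ v ∈ F, v < w :=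
    fun F X => ⟨toLex (F.sup (fun v => (ofLex v).1) + 1, toLinearExtension X), rfl, fun v hv =>
      Prod.Lex.lt_iff.2 (.inl (Nat.lt_succ_of_le (Finset.le_sup (f := fun v => (ofLex v).1) hv)))⟩
  let code : Set A → Lex (CondIndex A →₀ ℚ) := fun X =>
    toLex (Finsupp.single (toLex (0, toLinearExtension X)) 1)
  have code_condSet : ∀ X, condSet cond (ofLex (code X)) = X := fun X => condSet_single one_ne_zero
  have code_singleton_injective : Function.Injective fun a : A => code {a} := fun a b hab =>
    Set.singleton_injective (by rw [← code_condSet {a}, ← code_condSet {b}]; exact congrArg _ hab)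
  have : Nonempty (CondIndex A) := ⟨toLex (0, toLinearExtension ∅)⟩
  exact ⟨_, inferInstance, inferInstance, inferInstance, inferInstance, inferInstance, _, _,
    Function.invFun fun a => code {a}, isConditionTree_finsupp hcond _,
    Function.invFun_surjective code_singleton_injective,
    fun X => ⟨code X, fun y => by rw [code_condSet]⟩⟩

end FinsuppTree

/-! ### Interpretations as quotients -/

section Quotient

variable {L L' : FirstOrder.Language.{0, 0}} {M N : Type} {α : Type}

/-- The universal closure of a formula. -/
noncomputable def univClosure [Finite α] (φ : L.Formula α) : L.Sentence :=
  (φ.relabel Sum.inr).iAlls α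

theorem realize_univClosure [L.Structure M] [Finite α] (φ : L.Formula α) :
    M ⊨ univClosure φ ↔ ∀ v : α → M, φ.Realize v := by
  simp only [univClosure, Sentence.Realize, Formula.realize_iAlls, Formula.realize_relabel]
  exact Iff.rfl

/-- The relation defined by the binary formula `E`, applied to two terms. -/
def eqAt (E : L.Formula (Fin 2)) (s t : L.Term α) : L.Formula α :=
  E.subst ![s, t]

theorem realize_eqAt [L.Structure M] {E : L.Formula (Fin 2)} {s t : L.Term α} {v : α → M} :
    (eqAt E s t).Realize v ↔ E.Realize ![s.realize v, t.realize v] := by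
  rw [eqAt, Formula.Realize, BoundedFormula.realize_subst, ← Formula.Realize]
  congr! 1
  ext i
  fin_cases i <;> rfl

variable (Φ : L →ᴸ L') (E : L'.Formula (Fin 2))

/-- `g` exhibits `N` as the quotient, by the relation that `E` defines in `M`, of the structure
that `M` carries along the language map `Φ`. -/
structure IsQuotientMap [L'.Structure M] [L.Structure N] (g : M → N) : Prop where
  surjective : g.Surjective
  map_eq : ∀ x y, g x = g y ↔ E.Realize ![x, y]
  map_rel : ∀ {n} (R : L.Relations n) (v : Fin n → M),
    Structure.RelMap R (g ∘ v) ↔ Structure.RelMap (Φ.onRelation R) v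
  map_fun : ∀ {n} (F : L.Functions n) (v : Fin n → M),
    Structure.funMap F (g ∘ v) = g (Structure.funMap (Φ.onFunction F) v)

/-- The translation of `L`-formulas along `Φ` that reads equality as the relation `E`. -/
def translate : ∀ {n : ℕ}, L.BoundedFormula α n → L'.BoundedFormula α n
  | _, .falsum => .falsum
  | _, .equal s t => BoundedFormula.relabel id (eqAt E (Φ.onTerm s) (Φ.onTerm t))
  | _, .rel R ts => .rel (Φ.onRelation R) fun i => Φ.onTerm (ts i)
  | _, .imp φ ψ => (translate φ).imp (translate ψ)
  | _, .all φ => (translate φ).all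

variable {Φ E}

theorem IsQuotientMap.realize_onTerm [L'.Structure M] [L.Structure N] {g : M → N}
    (hg : IsQuotientMap Φ E g) (t : L.Term α) (v : α → M) :
    g ((Φ.onTerm t).realize v) = t.realize (g ∘ v) := by
  induction t with
  | var => rfl
  | func F ts ih =>
    simp only [LHom.onTerm, Term.realize_func, ← ih]
    exact (hg.map_fun F _).symm

theorem IsQuotientMap.realize_translate [L'.Structure M] [L.Structure N] {g : M → N}
    (hg : IsQuotientMap Φ E g) {n : ℕ} (φ : L.BoundedFormula α n) (v : α → M) (xs : Fin n → M) :
    (translate Φ E φ).Realize v xs ↔ φ.Realize (g ∘ v) (g ∘ xs) := by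
  have realize_term : ∀ {n} (t : L.Term (α ⊕ Fin n)) (xs : Fin n → M),
      g ((Φ.onTerm t).realize (Sum.elim v xs)) = t.realize (Sum.elim (g ∘ v) (g ∘ xs)) :=
    fun t xs => by rw [hg.realize_onTerm, Sum.comp_elim]
  induction φ with
  | falsum => rfl
  | equal s t =>
    simp only [translate, BoundedFormula.realize_relabel, BoundedFormula.Realize, ← realize_term,
      hg.map_eq]
    rw [← realize_eqAt, Formula.Realize]
    congr!
  | rel R ts =>
    simp only [translate, BoundedFormula.Realize, ← realize_term]
    exact (hg.map_rel R _).symm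
  | imp φ ψ ihφ ihψ => simp only [translate, BoundedFormula.realize_imp, ihφ, ihψ]
  | all φ ih =>
    simp only [translate, BoundedFormula.realize_all, ih, Fin.comp_snoc, hg.surjective.forall]

theorem IsQuotientMap.realize_translate_formula [L'.Structure M] [L.Structure N] {g : M → N}
    (hg : IsQuotientMap Φ E g) (φ : L.Formula α) (v : α → M) :
    Formula.Realize (translate Φ E φ) v ↔ φ.Realize (g ∘ v) := by
  rw [Formula.Realize, hg.realize_translate, Formula.Realize, Subsingleton.elim (g ∘ default)]

theorem IsQuotientMap.realize_translate_sentence [L'.Structure M] [L.Structure N] {g : M → N}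
    (hg : IsQuotientMap Φ E g) (σ : L.Sentence) :
    Sentence.Realize M (translate Φ E σ : L'.Sentence) ↔ N ⊨ σ := by
  rw [Sentence.Realize, hg.realize_translate_formula, Sentence.Realize,
    Subsingleton.elim (g ∘ default)]

variable (Φ E)

/-- The relation `E` is a congruence for the symbols of `L`, read along `Φ`. -/
structure IsCongruence (M : Type) [L'.Structure M] : Prop where
  equivalence : Equivalence fun x y : M => E.Realize ![x, y]
  funMap_congr : ∀ {n} (F : L.Functions n) (v w : Fin n → M), (∀ i, E.Realize ![v i, w i]) →
    E.Realize ![Structure.funMap (Φ.onFunction F) v, Structure.funMap (Φ.onFunction F) w]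
  relMap_congr : ∀ {n} (R : L.Relations n) (v w : Fin n → M), (∀ i, E.Realize ![v i, w i]) →
    Structure.RelMap (Φ.onRelation R) v → Structure.RelMap (Φ.onRelation R) w

variable {Φ E}

theorem IsQuotientMap.isCongruence [L'.Structure M] [L.Structure N] {g : M → N}
    (hg : IsQuotientMap Φ E g) : IsCongruence Φ E M where
  equivalence := by simpa only [← hg.map_eq] using eq_equivalence.comap g
  funMap_congr F v w h := by
    simp only [← hg.map_eq, ← hg.map_fun] at h ⊢
    exact congrArg _ (funext h)
  relMap_congr R v w h := by
    simp only [← hg.map_eq, ← hg.map_rel] at h ⊢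
    rw [show g ∘ v = g ∘ w from funext h]
    exact id

theorem IsCongruence.exists_isQuotientMap [L'.Structure M] (h : IsCongruence Φ E M) :
    ∃ (N : Type) (_ : L.Structure N) (g : M → N), IsQuotientMap Φ E g := by
  let S : Setoid M := ⟨_, h.equivalence⟩
  let _ : L.Prestructure S :=
    { toStructure := Φ.reduct M
      fun_equiv := h.funMap_congr _
      rel_equiv := fun v w hvw => propext
        ⟨h.relMap_congr _ v w hvw, h.relMap_congr _ w v fun i => S.symm (hvw i)⟩ }
  exact ⟨Quotient S, inferInstance, Quotient.mk S, Quotient.mk_surjective,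
    fun x y => Quotient.eq, relMap_quotient_mk' S, funMap_quotient_mk' S⟩

variable (Φ E)

/-- `E` is preserved by the function symbol `F`. -/
noncomputable def funCongr {n : ℕ} (F : L'.Functions n) : L'.Formula (Fin n ⊕ Fin n) :=
  (Formula.iInf fun i => eqAt E (Term.var (Sum.inl i)) (Term.var (Sum.inr i))).imp
    (eqAt E (Term.func F fun i => Term.var (Sum.inl i)) (Term.func F fun i => Term.var (Sum.inr i)))

/-- `E` is preserved by the relation symbol `R`. -/
noncomputable def relCongr {n : ℕ} (R : L'.Relations n) : L'.Formula (Fin n ⊕ Fin n) :=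
  (Formula.iInf fun i => eqAt E (Term.var (Sum.inl i)) (Term.var (Sum.inr i))).imp
    ((R.formula fun i => Term.var (Sum.inl i)).imp (R.formula fun i => Term.var (Sum.inr i)))

/-- The axioms of an equivalence relation, for `E`. -/
noncomputable def equivalenceTheory : L'.Theory :=
  {univClosure (eqAt E (Term.var 0) (Term.var 0) : L'.Formula (Fin 1)),
    univClosure ((eqAt E (Term.var 0) (Term.var 1)).imp (eqAt E (Term.var 1) (Term.var 0)) :
      L'.Formula (Fin 2)),
    univClosure ((eqAt E (Term.var 0) (Term.var 1)).imp
      ((eqAt E (Term.var 1) (Term.var 2)).imp (eqAt E (Term.var 0) (Term.var 2))) :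
      L'.Formula (Fin 3))}

/-- The theory whose models `M` are those for which `E` defines a congruence, along `Φ`, with
quotient a model of `T`. -/
noncomputable def quotientTheory (T : L.Theory) : L'.Theory :=
  equivalenceTheory E ∪
    (⋃ n, Set.range fun F : L.Functions n => univClosure (funCongr E (Φ.onFunction F))) ∪
    (⋃ n, Set.range fun R : L.Relations n => univClosure (relCongr E (Φ.onRelation R))) ∪
    translate Φ E '' T

variable {Φ E}

theorem realize_funCongr [L'.Structure M] {n : ℕ} (F : L'.Functions n) (u : Fin n ⊕ Fin n → M) :
    (funCongr E F).Realize u ↔ ((∀ i, E.Realize ![u (Sum.inl i), u (Sum.inr i)]) →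
      E.Realize ![Structure.funMap F (u ∘ Sum.inl), Structure.funMap F (u ∘ Sum.inr)]) := by
  simp only [funCongr, Formula.realize_imp, Formula.realize_iInf, realize_eqAt, Term.realize_var,
    Term.realize_func]
  rfl

theorem realize_relCongr [L'.Structure M] {n : ℕ} (R : L'.Relations n) (u : Fin n ⊕ Fin n → M) :
    (relCongr E R).Realize u ↔ ((∀ i, E.Realize ![u (Sum.inl i), u (Sum.inr i)]) →
      Structure.RelMap R (u ∘ Sum.inl) → Structure.RelMap R (u ∘ Sum.inr)) := by
  simp only [relCongr, Formula.realize_imp, Formula.realize_iInf, realize_eqAt, Term.realize_var,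
    Formula.realize_rel]
  rfl

theorem model_equivalenceTheory_iff [L'.Structure M] :
    M ⊨ equivalenceTheory E ↔ Equivalence fun x y : M => E.Realize ![x, y] := by
  simp only [equivalenceTheory, Theory.model_iff, Set.mem_insert_iff, Set.mem_singleton_iff,
    forall_eq_or_imp, forall_eq, realize_univClosure, Formula.realize_imp, realize_eqAt,
    Term.realize_var]
  exact ⟨fun ⟨hr, hs, ht⟩ => ⟨fun x => hr ![x], @fun x y => hs ![x, y],
    @fun x y z => ht ![x, y, z]⟩, fun h => ⟨fun v => h.refl _, fun v => h.symm, fun v => h.trans⟩⟩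

theorem model_quotientTheory_iff_isCongruence [L'.Structure M] {T : L.Theory} :
    M ⊨ quotientTheory Φ E T ↔ IsCongruence Φ E M ∧ M ⊨ (translate Φ E '' T : L'.Theory) := by
  simp only [quotientTheory, Theory.model_union_iff, model_equivalenceTheory_iff]
  refine and_congr_left' ⟨fun ⟨⟨hE, hF⟩, hR⟩ => ⟨hE, fun F v w => ?_, fun R v w => ?_⟩,
    fun h => ⟨⟨h.equivalence, ?_⟩, ?_⟩⟩
  · have := hF.realize_of_mem _ (Set.mem_iUnion.2 ⟨_, F, rfl⟩)
    exact (realize_funCongr _ _).1 ((realize_univClosure _).1 this (Sum.elim v w))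
  · have := hR.realize_of_mem _ (Set.mem_iUnion.2 ⟨_, R, rfl⟩)
    exact (realize_relCongr _ _).1 ((realize_univClosure _).1 this (Sum.elim v w))
  · simp only [Theory.model_iff, Set.mem_iUnion, Set.mem_range]
    rintro _ ⟨n, F, rfl⟩
    exact (realize_univClosure _).2 fun u => (realize_funCongr _ _).2 (h.funMap_congr F _ _)
  · simp only [Theory.model_iff, Set.mem_iUnion, Set.mem_range]
    rintro _ ⟨n, R, rfl⟩
    exact (realize_univClosure _).2 fun u => (realize_relCongr _ _).2 (h.relMap_congr R _ _)

theorem IsQuotientMap.model_translate_iff [L'.Structure M] [L.Structure N] {g : M → N}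
    (hg : IsQuotientMap Φ E g) {T : L.Theory} :
    M ⊨ (translate Φ E '' T : L'.Theory) ↔ N ⊨ T := by
  simp only [Theory.model_iff, Set.forall_mem_image]
  exact forall₂_congr fun σ _ => hg.realize_translate_sentence σ

theorem IsQuotientMap.model_quotientTheory_iff [L'.Structure M] [L.Structure N] {g : M → N}
    (hg : IsQuotientMap Φ E g) {T : L.Theory} : M ⊨ quotientTheory Φ E T ↔ N ⊨ T := by
  rw [model_quotientTheory_iff_isCongruence, hg.model_translate_iff, and_iff_right hg.isCongruence]

theorem exists_isQuotientMap_of_model [L'.Structure M] [Nonempty M] {T : L.Theory}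
    (h : M ⊨ quotientTheory Φ E T) :
    ∃ (N : Theory.ModelType.{0, 0, 0} T) (g : M → N), IsQuotientMap Φ E g := by
  obtain ⟨N, _, g, hg⟩ := (model_quotientTheory_iff_isCongruence.1 h).1.exists_isQuotientMap
  have : Nonempty N := .map g inferInstance
  have := hg.model_quotientTheory_iff.1 h
  exact ⟨.of T N, g, hg⟩

variable (Φ E)

/-- The one-dimensional interpretation of the quotient by `E` of the reduct along `Φ`. -/
def quotientInterpretation : Interpretation L' L where
  d := 1
  dom := ⊤
  eqf := eqAt E (Term.var (Sum.inl 0)) (Term.var (Sum.inr 0))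
  rel _ R := (Φ.onRelation R).formula fun i => Term.var (i, 0)
  func _ F := eqAt E (Term.func (Φ.onFunction F) fun i => Term.var (Sum.inl (i, 0)))
    (Term.var (Sum.inr 0))

/-- The domain of `quotientInterpretation Φ E` is the whole universe. -/
def quotientDomEquiv (M : Type) [L'.Structure M] : M ≃ (quotientInterpretation Φ E).Dom M where
  toFun x := ⟨fun _ => x, Formula.realize_top.2 trivial⟩
  invFun a := a.1 (0 : Fin 1)
  left_inv _ := rfl
  right_inv a := Subtype.ext (funext fun i => congrArg a.1 (Subsingleton.elim (0 : Fin 1) i))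

variable {Φ E}

theorem quotientInterpretation_represents_iff [L'.Structure M] [S : L.Structure N]
    {g : (quotientInterpretation Φ E).Dom M → N} :
    (quotientInterpretation Φ E).Represents M N S g ↔
      IsQuotientMap Φ E (g ∘ quotientDomEquiv Φ E M) := by
  set e := quotientDomEquiv Φ E M
  have realize_eqf : ∀ x y, (quotientInterpretation Φ E).eqf.Realize (Sum.elim (e x).1 (e y).1) ↔
      E.Realize ![x, y] := fun x y => realize_eqAt
  have realize_rel : ∀ n (R : L.Relations n) (v : Fin n → M),
      (((quotientInterpretation Φ E).rel n R).Realize fun p => (e (v p.1)).1 p.2) ↔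
        Structure.RelMap (Φ.onRelation R) v := fun n R v => Formula.realize_rel
  have realize_func : ∀ n (F : L.Functions n) (v : Fin n → M) (y : M),
      ((quotientInterpretation Φ E).func n F).Realize
        (Sum.elim (fun p => (e (v p.1)).1 p.2) (e y).1) ↔
        E.Realize ![Structure.funMap (Φ.onFunction F) v, y] := fun n F v y => realize_eqAt
  simp only [Interpretation.Represents, e.surjective.forall, e.surjective.comp_left.forall,
    Function.comp_apply, realize_eqf, realize_rel, realize_func]
  refine ⟨fun ⟨hg, heq, hrel, hfun⟩ => ⟨hg.comp e.surjective, heq, hrel _, fun F v => ?_⟩,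
    fun hg => ⟨.of_comp hg.surjective, hg.map_eq, fun n => hg.map_rel, fun n F v y => ?_⟩⟩
  · exact (hfun _ F v _).2 ((heq _ _).1 rfl)
  · rw [← hg.map_eq, ← hg.map_fun]
    rfl

theorem IsQuotientMap.represents [L'.Structure M] [S : L.Structure N] {g : M → N}
    (hg : IsQuotientMap Φ E g) :
    (quotientInterpretation Φ E).Represents M N S (g ∘ (quotientDomEquiv Φ E M).symm) :=
  quotientInterpretation_represents_iff.2 (by simpa [Function.comp_assoc] using hg)

theorem quotientInterpretation_interpretsIn {T₀ : L'.Theory} {T : L.Theory}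
    (h : quotientTheory Φ E T ⊆ T₀) : (quotientInterpretation Φ E).InterpretsIn T₀ T := fun M => by
  obtain ⟨N, g, hg⟩ := exists_isQuotientMap_of_model (M.is_model.mono h)
  exact ⟨N, _, hg.represents⟩

end Quotient

/-! ### Dense linear orders without endpoints -/

section Orders

variable {N : Type} [Lord.Structure N]

/-- The symbol `<`, as a relation symbol of `Lord`. -/
abbrev ordSymb : Lord.Relations 2 := OrdRel.lt

theorem relMap_ordSymb (v : Fin 2 → N) : Structure.RelMap ordSymb v ↔ ordLt (v 0) (v 1) := by
  rw [ordLt, show ![v 0, v 1] = v from funext fun i => by fin_cases i <;> rfl]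

/-- The finitely many axioms of dense linear orders without endpoints. -/
def dloAxioms : Lord.Theory :=
  let lt {n : ℕ} (i j : Fin n) : Lord.BoundedFormula Empty n :=
    ordSymb.boundedFormula₂ (&i) (&j)
  {∀' ∼(lt 0 0),
    ∀' ∀' ∀' (lt 0 1 ⟹ lt 1 2 ⟹ lt 0 2),
    ∀' ∀' (lt 0 1 ⊔ (lt 1 0 ⊔ &0 =' &1)),
    ∀' ∀' (lt 0 1 ⟹ ∃' (lt 0 2 ⊓ lt 2 1)),
    ∀' ∃' lt 0 1,
    ∀' ∃' lt 1 0}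

theorem model_dloAxioms_iff : N ⊨ dloAxioms ↔ IsDLOStructure N := by
  simp [dloAxioms, IsDLOStructure, ordLt, Sentence.Realize, Formula.Realize,
    BoundedFormula.realize_rel₂, Fin.snoc]

theorem model_Tdlo_iff [Nonempty N] : N ⊨ Tdlo ↔ IsDLOStructure N := by
  refine ⟨fun h => model_dloAxioms_iff.1 (h.mono fun σ hσ M _ _ hM => ?_),
    fun h => ⟨fun σ hσ => hσ N _ inferInstance h⟩⟩
  exact (model_dloAxioms_iff.2 hM).realize_of_mem σ hσ

theorem isDLOStructure_iff : IsDLOStructure N ↔ ∃ _ : LinearOrder N,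
    (∀ x y : N, x < y ↔ ordLt x y) ∧ DenselyOrdered N ∧ NoMinOrder N ∧ NoMaxOrder N := by
  classical
  refine ⟨fun ⟨hirrefl, htrans, htri, hdense, hmax, hmin⟩ => ?_,
    fun ⟨_, hlt, hdense, hmin, hmax⟩ => ?_⟩
  · have : IsStrictTotalOrder N ordLt :=
      { trichotomous := fun x y hxy hyx => ((htri x y).resolve_left hxy).resolve_left hyx
        irrefl := hirrefl
        trans := htrans }
    let _ := linearOrderOfSTO (ordLt (M := N))
    exact ⟨inferInstance, fun _ _ => Iff.rfl, ⟨hdense⟩, ⟨hmin⟩, ⟨hmax⟩⟩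
  · simp only [IsDLOStructure, ← hlt]
    exact ⟨lt_irrefl, fun _ _ _ => lt_trans,
      fun x y => (lt_trichotomy x y).imp_right Or.symm,
      fun _ _ => exists_between, exists_gt, exists_lt⟩

theorem IsDLOStructure.infinite [Nonempty N] (h : IsDLOStructure N) : Infinite N := by
  obtain ⟨_, -, -, -, _⟩ := isDLOStructure_iff.1 h
  exact NoMaxOrder.infinite

theorem card_Lord_le : Lord.card ≤ ℵ₀ := by
  have : IsEmpty (Σ n, Lord.Functions n) := ⟨fun F => Empty.elim F.2⟩
  have : Subsingleton (Σ n, Lord.Relations n) := ⟨by rintro ⟨_, ⟨⟩⟩ ⟨_, ⟨⟩⟩; rfl⟩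
  exact mk_le_aleph0_iff.2 (inferInstanceAs (Countable (_ ⊕ _)))

/-- Every linear order is a structure for the language of linear orders. -/
abbrev ordStructure (U : Type) [LT U] : Lord.Structure U where
  funMap F := Empty.elim F
  RelMap | .lt => fun x => x 0 < x 1

theorem model_Tdlo_ordStructure (U : Type) [LinearOrder U] [DenselyOrdered U] [NoMinOrder U]
    [NoMaxOrder U] [Nonempty U] : @Theory.Model Lord U (ordStructure U) Tdlo :=
  let _ := ordStructure U
  model_Tdlo_iff.2 (isDLOStructure_iff.2
    ⟨inferInstance, fun _ _ => Iff.rfl, inferInstance, inferInstance, inferInstance⟩)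

theorem aleph0_categorical_Tdlo : (ℵ₀ : Cardinal.{0}).Categorical Tdlo := by
  intro M N hM hN
  have : Countable M := mk_le_aleph0_iff.1 hM.le
  have : Countable N := mk_le_aleph0_iff.1 hN.le
  obtain ⟨_, hltM, _, _, _⟩ := isDLOStructure_iff.1 (model_Tdlo_iff.1 M.is_model)
  obtain ⟨_, hltN, _, _, _⟩ := isDLOStructure_iff.1 (model_Tdlo_iff.1 N.is_model)
  obtain ⟨f⟩ := Order.iso_of_countable_dense M N
  have map_ordLt : ∀ x y, ordLt (f x) (f y) ↔ ordLt x y := fun x y => by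
    rw [← hltN, ← hltM, f.lt_iff_lt]
  refine ⟨{ f.toEquiv with map_fun' := fun F => Empty.elim F, map_rel' := ?_ }⟩
  rintro _ ⟨⟩ v
  exact (relMap_ordSymb _).trans ((map_ordLt _ _).trans (relMap_ordSymb v).symm)

theorem isComplete_Tdlo : Tdlo.IsComplete := by
  let _ := ordStructure ℚ
  have := model_Tdlo_ordStructure ℚ
  exact aleph0_categorical_Tdlo.isComplete _ _ le_rfl
    (by simpa only [lift_id] using card_Lord_le)
    (Theory.Model.isSatisfiable ℚ) fun M => (model_Tdlo_iff.1 M.is_model).infinite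

theorem elementarilyEquivalent_of_model_Tdlo (M N : Theory.ModelType.{0, 0, 0} Tdlo) :
    M ≅[Lord] N :=
  (Theory.IsComplete.isComplete_iff_models_elementarily_equivalent.1 isComplete_Tdlo).2 M N

/-- The formula `a < x`, or `x < a`, with parameter `a`. -/
def boundFormula : N ⊕ N → ParamFormula Lord N 1
  | .inl a => ⟨1, ordSymb.formula₂
      (Term.var (Sum.inr 0)) (Term.var (Sum.inl 0)), fun _ => a⟩
  | .inr b => ⟨1, ordSymb.formula₂
      (Term.var (Sum.inl 0)) (Term.var (Sum.inr 0)), fun _ => b⟩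

theorem boundFormula_inl_realize {a : N} {e : Fin 1 → N} :
    (boundFormula (.inl a)).Realize e ↔ ordLt a (e 0) :=
  Formula.realize_rel₂

theorem boundFormula_inr_realize {b : N} {e : Fin 1 → N} :
    (boundFormula (.inr b)).Realize e ↔ ordLt (e 0) b :=
  Formula.realize_rel₂

theorem fillsCuts_of_isSaturatedAt {N : Type} [S : Lord.Structure N] [LinearOrder N]
    [DenselyOrdered N] [NoMinOrder N] [NoMaxOrder N] [Nonempty N]
    (hlt : ∀ x y : N, x < y ↔ ordLt x y) {lam : Cardinal.{0}} (hlam : ℵ₀ ≤ lam)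
    (hN : IsSaturatedAt Lord N S lam) : FillsCuts N lam := by
  classical
  intro ι κ a b hι hκ hab
  obtain ⟨e, he⟩ := hN (Set.range (Sum.elim a b))
    (mk_range_le.trans_lt (by simpa using add_lt_of_lt hlam hι hκ))
    (Set.range (boundFormula ∘ Sum.map a b))
    (by rintro _ ⟨i | j, rfl⟩ _ <;> simp [boundFormula])
    (fun s hs => by
      obtain ⟨t, -, rfl⟩ := Finset.subset_set_image_iff.1 (Set.image_univ ▸ hs)
      obtain ⟨m, hlo, hhi⟩ := Order.exists_between_finsets (t.toLeft.image a) (t.toRight.image b)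
        (by simpa using fun i _ j _ => hab i j)
      refine ⟨fun _ => m, ?_⟩
      simp only [Finset.mem_image, forall_exists_index, and_imp]
      rintro _ (i | j) ht rfl
      · exact boundFormula_inl_realize.2 ((hlt _ _).1 (hlo _ (by simpa using ⟨i, ht, rfl⟩)))
      · exact boundFormula_inr_realize.2 ((hlt _ _).1 (hhi _ (by simpa using ⟨j, ht, rfl⟩))))
  simp only [Set.forall_mem_range, Sum.forall] at he
  exact ⟨e 0, fun i => (hlt _ _).2 (boundFormula_inl_realize.1 (he.1 i)),
    fun j => (hlt _ _).2 (boundFormula_inr_realize.1 (he.2 j))⟩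

end Orders

/-! ### The witnessing theory -/

section ConditionTreeTheory

variable {L : FirstOrder.Language.{0, 0}} {M : Type} [L.Structure M]

/-- The first-order axioms of condition trees, in the order of the fields of `IsConditionTree`. -/
def conditionTreeTheory (lt pre con : L.Relations 2) : L.Theory :=
  let at₂ (R : L.Relations 2) {n : ℕ} (i j : Fin n) : L.BoundedFormula Empty n :=
    R.boundedFormula₂ (&i) (&j)
  {∀' at₂ pre 0 0,
    ∀' ∀' ∀' (at₂ pre 0 1 ⟹ at₂ pre 1 2 ⟹ at₂ pre 0 2),
    ∀' ∀' ∀' (at₂ pre 0 2 ⟹ at₂ pre 1 2 ⟹ at₂ pre 0 1 ⊔ at₂ pre 1 0),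
    ∀' ∀' ∀' ∀' (at₂ pre 0 1 ⟹ at₂ pre 0 2 ⟹ at₂ lt 1 3 ⟹ at₂ lt 3 2 ⟹ at₂ pre 0 3),
    ∀' ∀' (at₂ pre 0 1 ⟹ ∼(&0 =' &1) ⟹ ∃' ∃' (at₂ pre 0 2 ⊓ (at₂ pre 0 3 ⊓
      ∀' ∀' (at₂ pre 0 4 ⟹ ∼(&0 =' &4) ⟹ at₂ pre 4 1 ⟹ at₂ pre 4 5 ⟹
        at₂ lt 2 5 ⊓ at₂ lt 5 3)))),
    ∀' ∀' ∀' (at₂ pre 0 1 ⟹ at₂ con 1 2 ⟹ at₂ con 0 2),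
    ∃' ∀' at₂ con 0 1,
    ∀' ∀' ∃' (at₂ pre 0 2 ⊓ ∀' (at₂ con 2 3 ⇔ (at₂ con 0 3 ⊓ at₂ con 1 3))),
    ∀' ∀' ∀' (at₂ pre 0 1 ⟹ ∃' (at₂ con 0 3 ⊓ at₂ con 2 3) ⟹
      ∃' (at₂ pre 3 1 ⊓ (∃' (at₂ con 3 4 ⊓ at₂ con 2 4) ⊓
        ∀' (at₂ pre 4 1 ⟹ ∃' (at₂ con 4 5 ⊓ at₂ con 2 5) ⟹ at₂ pre 4 3)))),
    ∀' ∀' ∃' (at₂ pre 2 0 ⊓ (at₂ pre 2 1 ⊓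
      ∀' (at₂ pre 3 0 ⟹ at₂ pre 3 1 ⟹ at₂ pre 3 2)))}

theorem model_conditionTreeTheory_iff [LT M] {lt pre con : L.Relations 2}
    (hlt : ∀ x y : M, x < y ↔ Structure.RelMap lt ![x, y]) :
    M ⊨ conditionTreeTheory lt pre con ↔ IsConditionTree
      (fun x y : M => Structure.RelMap pre ![x, y]) (fun x y => Structure.RelMap con ![x, y]) := by
  simp only [conditionTreeTheory, Theory.model_iff, Set.mem_insert_iff, Set.mem_singleton_iff,
    forall_eq_or_imp, forall_eq, Sentence.Realize, Formula.Realize, BoundedFormula.realize_all,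
    BoundedFormula.realize_ex, BoundedFormula.realize_imp, BoundedFormula.realize_not,
    BoundedFormula.realize_inf, BoundedFormula.realize_sup, BoundedFormula.realize_iff,
    BoundedFormula.realize_rel₂, BoundedFormula.realize_bdEqual, ← hlt]
  exact ⟨fun ⟨h₁, h₂, h₃, h₄, h₅, h₆, h₇, h₈, h₉, h₁₀⟩ =>
      ⟨h₁, h₂, h₃, h₄, h₅, h₆, h₇, h₈, h₉, h₁₀⟩,
    fun h => ⟨h.refl, h.trans, h.total, h.convex, h.exists_bounds, h.con_of_pre, h.exists_root,
      h.exists_append, h.exists_last, h.exists_meet⟩⟩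

end ConditionTreeTheory

section Comprehension

variable {L L' : FirstOrder.Language.{0, 0}} {M N : Type} [L'.Structure M] [L.Structure N]

/-- Some element codes, by means of the relation `con`, the set defined by a formula. -/
def codeFormula (con : L'.Relations 2) {k : ℕ} (φ : L'.Formula (Fin 1 ⊕ Fin k)) :
    L'.Formula (Fin k) :=
  ∃' ∀' (con.boundedFormula₂ (&0) (&1) ⇔
    BoundedFormula.relabel (n := 2) (k := 0) (Sum.elim (fun _ => Sum.inr 1) Sum.inl) φ)

theorem realize_codeFormula {con : L'.Relations 2} {k : ℕ} {φ : L'.Formula (Fin 1 ⊕ Fin k)}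
    {v : Fin k → M} : (codeFormula con φ).Realize v ↔
      ∃ c : M, ∀ y, Structure.RelMap con ![c, y] ↔ φ.Realize (Sum.elim (fun _ => y) v) := by
  simp only [codeFormula, Formula.Realize, BoundedFormula.realize_ex, BoundedFormula.realize_all,
    BoundedFormula.realize_iff, BoundedFormula.realize_rel₂, BoundedFormula.realize_relabel]
  refine exists_congr fun c => forall_congr' fun y => iff_congr Iff.rfl ?_
  rw [Sum.comp_elim]
  congr!

/-- Every subset of the quotient that is definable with parameters, in the language of the
quotient, is coded by means of the relation `con`. -/
noncomputable def comprehensionTheory (Φ : L →ᴸ L') (E : L'.Formula (Fin 2))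
    (con : L'.Relations 2) : L'.Theory :=
  ⋃ k, Set.range fun φ : L.Formula (Fin 1 ⊕ Fin k) =>
    univClosure (codeFormula con (translate Φ E φ))

theorem IsQuotientMap.model_comprehensionTheory_iff {Φ : L →ᴸ L'} {E : L'.Formula (Fin 2)}
    {g : M → N} (hg : IsQuotientMap Φ E g) {con : L'.Relations 2} :
    M ⊨ comprehensionTheory Φ E con ↔ ∀ ψ : ParamFormula L N 1, ∃ c : M, ∀ y,
      Structure.RelMap con ![c, y] ↔ ψ.Realize fun _ => g y := by
  have realize_code : ∀ (k : ℕ) (φ : L.Formula (Fin 1 ⊕ Fin k)) (v : Fin k → M),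
      (codeFormula con (translate Φ E φ)).Realize v ↔ ∃ c : M, ∀ y,
        Structure.RelMap con ![c, y] ↔ (ParamFormula.mk k φ (g ∘ v)).Realize fun _ => g y := by
    simp only [realize_codeFormula, hg.realize_translate_formula, Sum.comp_elim]
    exact fun _ _ _ => Iff.rfl
  refine ⟨fun h ⟨k, φ, par⟩ => ?_, fun h => Theory.model_iff _ |>.2 fun σ hσ => ?_⟩
  · obtain ⟨v, rfl⟩ := hg.surjective.comp_left par
    have := h.realize_of_mem _ (Set.mem_iUnion.2 ⟨k, φ, rfl⟩)
    exact (realize_code k φ v).1 ((realize_univClosure _).1 this v)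
  · obtain ⟨k, φ, rfl⟩ := Set.mem_iUnion.1 hσ
    exact (realize_univClosure _).2 fun v => (realize_code k φ v).2 (h _)

end Comprehension

section WitnessTheory

/-- The symbols `eqv`, for the quotient map onto a model of the given theory, and `lt`, `pre`,
`con`, for a condition tree living on a dense linear order. -/
inductive CodingRel : ℕ → Type
  | eqv : CodingRel 2
  | lt : CodingRel 2
  | pre : CodingRel 2
  | con : CodingRel 2

/-- The language of the additional symbols of the witnessing theory. -/
def Lcod : FirstOrder.Language.{0, 0} := ⟨fun _ => Empty, CodingRel⟩

variable (L : FirstOrder.Language.{0, 0})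

/-- A binary additional symbol, as a symbol of the expanded language. -/
abbrev codingSymb (R : CodingRel 2) : (L.sum Lcod).Relations 2 := Sum.inr R

/-- The relation whose quotient is the model of the given theory. -/
def eqvFormula : (L.sum Lcod).Formula (Fin 2) :=
  (codingSymb L .eqv).formula₂ (Term.var 0) (Term.var 1)

/-- Equality, as a formula of the expanded language. -/
def eqFormula : (L.sum Lcod).Formula (Fin 2) := (Term.var 0).equal (Term.var 1)

/-- The inclusion of the language of linear orders. -/
def ordHom : Lord →ᴸ L.sum Lcod where
  onFunction _ F := Empty.elim F
  onRelation | _, .lt => codingSymb L .lt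

variable {L} {M N : Type}

/-- The theory witnessing `T ⊲* T*_ord`: a dense linear order carrying a condition tree, and a
model of `T` as a quotient of its universe, whose definable subsets are all conditions. -/
noncomputable def witnessTheory (T : L.Theory) : (L.sum Lcod).Theory :=
  quotientTheory LHom.sumInl (eqvFormula L) T ∪ quotientTheory (ordHom L) (eqFormula L) Tdlo ∪
    conditionTreeTheory (codingSymb L .lt) (codingSymb L .pre) (codingSymb L .con) ∪
    comprehensionTheory LHom.sumInl (eqvFormula L) (codingSymb L .con)

theorem quotientTheory_subset_witnessTheory (T : L.Theory) :
    quotientTheory LHom.sumInl (eqvFormula L) T ⊆ witnessTheory T := fun _ h =>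
  .inl (.inl (.inl h))

theorem quotientTheory_ordHom_subset_witnessTheory (T : L.Theory) :
    quotientTheory (ordHom L) (eqFormula L) Tdlo ⊆ witnessTheory T := fun _ h =>
  .inl (.inl (.inr h))

theorem IsQuotientMap.bijective [(L.sum Lcod).Structure M] [Lord.Structure N] {g : M → N}
    (hg : IsQuotientMap (ordHom L) (eqFormula L) g) : g.Bijective :=
  ⟨fun x y h => Formula.realize_equal.1 ((hg.map_eq x y).1 h), hg.surjective⟩

theorem IsQuotientMap.map_ordLt [(L.sum Lcod).Structure M] [Lord.Structure N] {g : M → N}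
    (hg : IsQuotientMap (ordHom L) (eqFormula L) g) (x y : M) :
    ordLt (g x) (g y) ↔ Structure.RelMap (codingSymb L .lt) ![x, y] :=
  (relMap_ordSymb (g ∘ ![x, y])).symm.trans (hg.map_rel ordSymb ![x, y])

theorem card_Lcod_le : Lcod.card ≤ ℵ₀ := by
  have : IsEmpty (Σ n, Lcod.Functions n) := ⟨fun F => Empty.elim F.2⟩
  have : Countable (Σ n, Lcod.Relations n) := by
    have : ∀ n, Countable (CodingRel n) := fun n =>
      Function.Injective.countable (f := CodingRel.ctorIdx)
        (by rintro ⟨⟩ ⟨⟩ <;> simp [CodingRel.ctorIdx])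
    exact inferInstanceAs (Countable (Σ n, CodingRel n))
  exact mk_le_aleph0_iff.2 (inferInstanceAs (Countable (_ ⊕ _)))

theorem theoryCard_sum_Lcod_le (T : L.Theory) (T₀ : (L.sum Lcod).Theory) :
    theoryCard T₀ ≤ theoryCard T := by
  have h₀ : ℵ₀ ≤ theoryCard T := self_le_add_left _ _
  have hL : L.card ≤ theoryCard T := (self_le_add_right _ _).trans (self_le_add_right _ _)
  have hsum : (L.sum Lcod).card ≤ theoryCard T := by
    rw [card_sum, lift_id, lift_id]
    exact add_le_of_le h₀ hL (card_Lcod_le.trans h₀)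
  have hT₀ : #T₀ ≤ theoryCard T :=
    (mk_set_le _).trans ((mk_formula_le _ _).trans (max_le h₀ (by simpa using hsum)))
  exact add_le_of_le h₀ (add_le_of_le h₀ hsum hT₀) h₀

end WitnessTheory

/-! ### Joint models and transfer of saturation -/

section Existence

variable {L : FirstOrder.Language.{0, 0}}

/-- The additional structure given by a condition tree on an order and a map to be made into a
quotient map. -/
abbrev codingStructure {U A : Type} [LT U] (pre con : U → U → Prop) (π : U → A) :
    Lcod.Structure U where
  funMap F := Empty.elim F
  RelMap
    | .eqv => fun x => π (x 0) = π (x 1)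
    | .lt => fun x => x 0 < x 1
    | .pre => fun x => pre (x 0) (x 1)
    | .con => fun x => con (x 0) (x 1)

theorem exists_model_witnessTheory {T : L.Theory} (A : Theory.ModelType.{0, 0, 0} T) :
    ∃ (M : Theory.ModelType.{0, 0, 0} (witnessTheory T)) (g : M → A),
      IsQuotientMap LHom.sumInl (eqvFormula L) g := by
  obtain ⟨U, _, _, _, _, _, pre, con, π, htree, hπ, hcode⟩ := exists_conditionTree A
  let _ : L.Structure U :=
    { funMap := fun F x => Function.surjInv hπ (Structure.funMap F (π ∘ x))
      RelMap := fun R x => Structure.RelMap R (π ∘ x) }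
  let _ := codingStructure pre con π
  let _ := ordStructure U
  have hg : IsQuotientMap LHom.sumInl (eqvFormula L) π :=
    { surjective := hπ
      map_eq := fun _ _ => by
        rw [eqvFormula, Formula.realize_rel₂]
        exact Iff.rfl
      map_rel := fun _ _ => Iff.rfl
      map_fun := fun _ _ => (Function.surjInv_eq hπ _).symm }
  have hord : IsQuotientMap (ordHom L) (eqFormula L) (id : U → U) :=
    { surjective := Function.surjective_id
      map_eq := fun _ _ => by
        rw [eqFormula, Formula.realize_equal]
        exact Iff.rfl
      map_rel := by rintro _ ⟨⟩ v; exact Iff.rfl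
      map_fun := fun F => Empty.elim F }
  have hU : U ⊨ witnessTheory T := by
    simp only [witnessTheory, Theory.model_union_iff]
    refine ⟨⟨⟨hg.model_quotientTheory_iff.2 inferInstance,
      hord.model_quotientTheory_iff.2 (model_Tdlo_ordStructure U)⟩,
      (model_conditionTreeTheory_iff fun _ _ => Iff.rfl).2 htree⟩,
      hg.model_comprehensionTheory_iff.2 fun ψ => hcode {a | ψ.Realize fun _ => a}⟩
  exact ⟨.of _ U, π, hg⟩

theorem jointModels_witnessTheory (T : L.Theory) :
    JointModels (witnessTheory T) T Tdlo (quotientInterpretation LHom.sumInl (eqvFormula L))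
      (quotientInterpretation (ordHom L) (eqFormula L)) := by
  intro A₁ A₂
  obtain ⟨M, g, hg⟩ := exists_model_witnessTheory A₁
  obtain ⟨N, h, hh⟩ :=
    quotientInterpretation_interpretsIn (quotientTheory_ordHom_subset_witnessTheory T) M
  exact ⟨M, A₁, _, N, h, hg.represents, hh, rfl, elementarilyEquivalent_of_model_Tdlo N A₂⟩

end Existence

section Transfer

variable {L : FirstOrder.Language.{0, 0}} {M N : Type} {lam : Cardinal.{0}}

theorem isSaturatedAt_of_conditionTree [Preorder M] {pre con : M → M → Prop}
    (h : IsConditionTree pre con) (hlam : ℵ₀ < lam) (hfill : FillsCuts M lam)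
    (hL : L.card < lam) [S : L.Structure N] {g : M → N} (hg : g.Surjective)
    (hcode : ∀ ψ : ParamFormula L N 1, ∃ c, ∀ y, con c y ↔ ψ.Realize fun _ => g y) :
    IsSaturatedAt L N S lam := by
  classical
  intro A hA p hp hfin
  choose code hcode using hcode
  have hcard : #p < lam := (mk_le_mk_of_subset hp).trans_lt (mk_paramFormula_lt hlam hL hA)
  obtain ⟨y, hy⟩ := h.exists_forall_con hlam hfill hcard (q := fun ψ : p => code ψ) fun F => by
    obtain ⟨e, he⟩ := hfin (F.image Subtype.val) (by simp)
    obtain ⟨y, hy⟩ := hg (e 0)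
    refine ⟨y, fun ψ hψ => (hcode _ _).2 ?_⟩
    rw [hy, show (fun _ => e 0) = e from funext fun i => congrArg e (Subsingleton.elim 0 i)]
    exact he ψ (Finset.mem_image_of_mem _ hψ)
  exact ⟨fun _ => g y, fun ψ hψ => (hcode _ _).1 (hy ⟨ψ, hψ⟩)⟩

theorem transferClause_witnessTheory (T : L.Theory) (hlam : ℵ₀ < lam) (hL : L.card < lam)
    (kap : Cardinal.{0}) :
    TransferClause (witnessTheory T) (quotientInterpretation LHom.sumInl (eqvFormula L))
      (quotientInterpretation (ordHom L) (eqFormula L)) lam lam kap := by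
  intro M _ N₁ _ g₁ N₂ _ g₂ hg₁ hg₂ hsat
  have hM : (M : Type) ⊨ witnessTheory T := M.is_model
  simp only [witnessTheory, Theory.model_union_iff] at hM
  obtain ⟨⟨⟨-, hdlo⟩, htree⟩, hcode⟩ := hM
  rw [quotientInterpretation_represents_iff] at hg₁ hg₂
  have : Nonempty N₂ := .map (g₂ ∘ quotientDomEquiv _ _ M) inferInstance
  obtain ⟨_, hlt, _, _, _⟩ := isDLOStructure_iff.1
    (model_Tdlo_iff.1 (hg₂.model_quotientTheory_iff.1 hdlo))
  let _ : Preorder M := Preorder.lift (g₂ ∘ quotientDomEquiv (ordHom L) (eqFormula L) M)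
  have hfill : FillsCuts M lam :=
    (fillsCuts_of_isSaturatedAt hlt hlam.le hsat).of_bijective hg₂.bijective fun _ _ => Iff.rfl
  have htree := (model_conditionTreeTheory_iff fun x y : M =>
    (hlt _ _).trans (hg₂.map_ordLt x y)).1 htree
  exact isSaturatedAt_of_conditionTree htree hlam hfill hL hg₁.surjective
    (hg₁.model_comprehensionTheory_iff.1 hcode)

end Transfer

/-- `T*_ord`, the theory of dense linear orders without endpoints, is
`⊲*_λ`-maximal for every cardinal `λ > ℵ₀`. -/
theorem Tdlo_triangleStarMaximal :
    ∀ lam : Cardinal.{0}, ℵ₀ < lam → TriangleStarMaximal Tdlo lam := by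
  intro lam hlam L T hT
  have hL : L.card < lam :=
    ((self_le_add_right _ _).trans (self_le_add_right _ _)).trans_lt hT
  exact ⟨L.sum Lcod, witnessTheory T,
    quotientInterpretation LHom.sumInl (eqvFormula L),
    quotientInterpretation (ordHom L) (eqFormula L),
    (theoryCard_sum_Lcod_le T _).trans (self_le_add_right _ _),
    quotientInterpretation_interpretsIn (quotientTheory_subset_witnessTheory T),
    quotientInterpretation_interpretsIn (quotientTheory_ordHom_subset_witnessTheory T),
    jointModels_witnessTheory T,
    transferClause_witnessTheory T hlam hL 0⟩

end SopPaper
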